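/- arXiv:2410.22227 — 2 statements merged into one kernel-verified Lean document; each statement's English description precedes it below -/
import Mathlib

section
/- Every countable, second-countable, regular Hausdorff, scattered topological space is homeomorphic to the order topology of a countable linear order that contains no subset order-isomorphic to ℚ and has only countably many downward-closed subsets. -/
/-!
A countable `T₃` space has a basis of clopen sets. Call a set `W` *good* if its subspace topology is
the order topology of a linear order on `W` with a first and a last element and with only countably
many cuts. The endpoints are what makes goodness pass to ordered sums (`good_lex`): consecutive
blocks are separated by jumps, so ordering the blocks along an index order `I` creates no limit
points other than those of `I`.

* A clopen set covered by clopen sets all of whose nonempty clopen subsets are good splits into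
  countably many disjoint nonempty good clopen blocks. Indexing them by a finite order or by
  `ω + ω*`, where every index is isolated, gives a good set (`good_of_cover`).
* If `x` is not isolated in a clopen `W`, and every point of `W` other than `x` has a clopen
  neighbourhood as above, take a strictly decreasing clopen neighbourhood base `V 0 = W, V 1, …`
  of `x`. The blocks `V n \ V (n + 1)` are good, and placing them in order type `ω` with `x`
  on top gives a good order on `W` (`good_of_limit`).

Hence the set of points without a clopen neighbourhood all of whose nonempty clopen subsets are good
has no isolated point, and scatteredness makes it empty; so the whole space is good. Finally `ℚ`
does not embed in an order with countably many cuts, as it would produce uncountably many of them,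
one for each real number (`not_strictMono_rat`).
-/

/-- A topological space is scattered if every nonempty subset has a point that is
isolated in the subspace topology. -/
def Scattered (X : Type*) [TopologicalSpace X] : Prop :=
  ∀ S : Set X, S.Nonempty → ∃ x ∈ S, ∃ U : Set X, IsOpen U ∧ U ∩ S = {x}

open Set Topology
open scoped ENat

/-! ### Bounded orders inducing the topology of a subset -/

/-- `r` is a strict total order whose restriction to `W` has a first and a last element, has
countably many cuts and induces the subspace topology on `W`. For convenience `r` is defined on
all of `X`, but only its restriction to `W` matters. Rays of `W` are required to be open in `X`,
not merely in `W`; for open `W` this is the same. A point of `W` is allowed to have no constraint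
on one side, which covers endpoints. -/
structure GoodOrder {X : Type} [TopologicalSpace X] (W : Set X) (r : X → X → Prop) : Prop where
  sto : IsStrictTotalOrder X r
  openL : ∀ a ∈ W, IsOpen {x | x ∈ W ∧ r x a}
  openR : ∀ a ∈ W, IsOpen {x | x ∈ W ∧ r a x}
  nhdL : ∀ U, IsOpen U → ∀ y ∈ W, y ∈ U →
    (∃ a ∈ W, r a y ∧ ∀ x ∈ W, r a x → r x y → x ∈ U) ∨ ∀ x ∈ W, r x y → x ∈ U
  nhdR : ∀ U, IsOpen U → ∀ y ∈ W, y ∈ U →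
    (∃ a ∈ W, r y a ∧ ∀ x ∈ W, r y x → r x a → x ∈ U) ∨ ∀ x ∈ W, r y x → x ∈ U
  cuts : {A : Set X | A ⊆ W ∧ ∀ x ∈ A, ∀ y ∈ W, r y x → y ∈ A}.Countable
  bot : ∃ b ∈ W, ∀ x ∈ W, ¬ r x b
  top : ∃ t ∈ W, ∀ x ∈ W, ¬ r t x

/-- `W` carries a bounded linear order with countably many cuts inducing its topology. -/
def Good {X : Type} [TopologicalSpace X] (W : Set X) : Prop := ∃ r, GoodOrder W r

theorem good_singleton {X : Type} [TopologicalSpace X] (x : X) : Good ({x} : Set X) := by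
  have hs : IsStrictTotalOrder X WellOrderingRel := inferInstance
  have hirr : ∀ a : X, ¬ WellOrderingRel a a := fun a => irrefl a
  refine ⟨WellOrderingRel, hs, ?_, ?_, ?_, ?_, ?_, ⟨x, rfl, ?_⟩, ⟨x, rfl, ?_⟩⟩
  · rintro a rfl
    convert isOpen_empty
    grind
  · rintro a rfl
    convert isOpen_empty
    grind
  · grind
  · grind
  · exact ((Set.finite_singleton x).finite_subsets.subset (fun A hA => hA.1)).countable
  · grind
  · grind

/-- Ordered sums: the blocks of `W` on which `π` is constant are placed one after the other along
`I`. The hypotheses `hL` and `hR` say that, towards a block `i` which is approached by smaller (larger)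
indices without a gap, the topology at each point of that block is the one pulled back from `I`. -/
theorem good_lex {X : Type} [TopologicalSpace X] {I : Type} [LinearOrder I] [Countable I]
    (W : Set X) (π : X → I)
    (hcut : {J : Set I | IsLowerSet J}.Countable)
    (hbot : ∃ b : I, ∀ i, b ≤ i) (htop : ∃ t : I, ∀ i, i ≤ t)
    (hF : ∀ i, Good {x | x ∈ W ∧ π x = i})
    (hoL : ∀ i, IsOpen {x | x ∈ W ∧ π x < i})
    (hoR : ∀ i, IsOpen {x | x ∈ W ∧ i < π x})
    (hL : ∀ U, IsOpen U → ∀ y ∈ W, y ∈ U →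
      (∃ j < π y, ∀ x ∈ W, j < π x → π x < π y → x ∈ U) ∨ ∀ i, π y ≤ i)
    (hR : ∀ U, IsOpen U → ∀ y ∈ W, y ∈ U →
      (∃ j > π y, ∀ x ∈ W, π y < π x → π x < j → x ∈ U) ∨ ∀ i, i ≤ π y) :
    Good W := by
  choose r hr using hF
  obtain ⟨R, hlt, heq, hle⟩ : ∃ R : X → X → Prop, (∀ x y, π x < π y → R x y) ∧
      (∀ i x y, π x = i → π y = i → (R x y ↔ r i x y)) ∧ (∀ x y, R x y → π x ≤ π y) := by
    refine ⟨fun x y => π x < π y ∨ (π x = π y ∧ r (π y) x y), fun x y h => .inl h, ?_, ?_⟩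
    · rintro i x y h rfl
      simp [h]
    · rintro x y (h | h)
      · exact h.le
      · exact h.1.le
  refine ⟨R, ?_, ?_, ?_, ?_, ?_, ?_, ?_, ?_⟩
  · refine { trichotomous := fun a b h k => ?_, irrefl := fun a h => ?_, trans := fun a b c h k => ?_ }
    · have e : π a = π b :=
        le_antisymm (not_lt.1 fun l => k (hlt _ _ l)) (not_lt.1 fun l => h (hlt _ _ l))
      exact (hr (π b)).sto.trichotomous a b (mt (heq _ _ _ e rfl).2 h) (mt (heq _ _ _ rfl e).2 k)
    · exact (hr (π a)).sto.irrefl a ((heq _ _ _ rfl rfl).1 h)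
    · rcases (hle _ _ h).lt_or_eq with h1 | h1
      · exact hlt _ _ (h1.trans_le (hle _ _ k))
      · rcases (hle _ _ k).lt_or_eq with h2 | h2
        · exact hlt _ _ (h1 ▸ h2)
        · exact (heq (π c) _ _ (h1.trans h2) rfl).2 ((hr (π c)).sto.trans a b c
            ((heq _ _ _ (h1.trans h2) h2).1 h) ((heq _ _ _ h2 rfl).1 k))
  · intro a ha
    convert (hoL (π a)).union ((hr (π a)).openL a ⟨ha, rfl⟩) using 1
    ext x
    constructor
    · rintro ⟨hx, h⟩
      rcases (hle _ _ h).lt_or_eq with h1 | h1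
      · exact .inl ⟨hx, h1⟩
      · exact .inr ⟨⟨hx, h1⟩, (heq _ _ _ h1 rfl).1 h⟩
    · rintro (⟨hx, h⟩ | ⟨⟨hx, h⟩, h'⟩)
      · exact ⟨hx, hlt _ _ h⟩
      · exact ⟨hx, (heq _ _ _ h rfl).2 h'⟩
  · intro a ha
    convert (hoR (π a)).union ((hr (π a)).openR a ⟨ha, rfl⟩) using 1
    ext x
    constructor
    · rintro ⟨hx, h⟩
      rcases (hle _ _ h).lt_or_eq with h1 | h1
      · exact .inl ⟨hx, h1⟩
      · exact .inr ⟨⟨hx, h1.symm⟩, (heq _ _ _ rfl h1.symm).1 h⟩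
    · rintro (⟨hx, h⟩ | ⟨⟨hx, h⟩, h'⟩)
      · exact ⟨hx, hlt _ _ h⟩
      · exact ⟨hx, (heq _ _ _ rfl h).2 h'⟩
  · intro U hU y hy hyU
    rcases (hr (π y)).nhdL U hU y ⟨hy, rfl⟩ hyU with ⟨a, ⟨haW, ha⟩, h1, h2⟩ | h
    · left
      refine ⟨a, haW, (heq _ _ _ ha rfl).2 h1, fun x hx h3 h4 => ?_⟩
      have e : π x = π y := le_antisymm (hle _ _ h4) (ha ▸ hle _ _ h3)
      exact h2 x ⟨hx, e⟩ ((heq _ _ _ ha e).1 h3) ((heq _ _ _ e rfl).1 h4)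
    · rcases hL U hU y hy hyU with ⟨j, hj, h1⟩ | h1
      · left
        -- the last point of the block `j` serves as left end of the interval
        obtain ⟨t, ⟨htW, ht⟩, ht'⟩ := (hr j).top
        refine ⟨t, htW, hlt _ _ (ht ▸ hj), fun x hx h3 h4 => ?_⟩
        rcases (hle _ _ h4).lt_or_eq with h5 | h5
        · rcases (hle _ _ h3).lt_or_eq with h6 | h6
          · exact h1 x hx (ht ▸ h6) h5
          · exact absurd ((heq j _ _ ht (h6 ▸ ht)).1 h3) (ht' x ⟨hx, h6 ▸ ht⟩)
        · exact h x ⟨hx, h5⟩ ((heq _ _ _ h5 rfl).1 h4)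
      · right
        intro x hx h2
        have h5 := le_antisymm (hle _ _ h2) (h1 (π x))
        exact h x ⟨hx, h5⟩ ((heq _ _ _ h5 rfl).1 h2)
  · intro U hU y hy hyU
    rcases (hr (π y)).nhdR U hU y ⟨hy, rfl⟩ hyU with ⟨a, ⟨haW, ha⟩, h1, h2⟩ | h
    · left
      refine ⟨a, haW, (heq _ _ _ rfl ha).2 h1, fun x hx h3 h4 => ?_⟩
      have e : π x = π y := le_antisymm (ha ▸ hle _ _ h4) (hle _ _ h3)
      exact h2 x ⟨hx, e⟩ ((heq _ _ _ rfl e).1 h3) ((heq _ _ _ e ha).1 h4)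
    · rcases hR U hU y hy hyU with ⟨j, hj, h1⟩ | h1
      · left
        obtain ⟨t, ⟨htW, ht⟩, ht'⟩ := (hr j).bot
        refine ⟨t, htW, hlt _ _ (ht ▸ hj), fun x hx h3 h4 => ?_⟩
        rcases (hle _ _ h3).lt_or_eq with h5 | h5
        · rcases (hle _ _ h4).lt_or_eq with h6 | h6
          · exact h1 x hx h5 (ht ▸ h6)
          · exact absurd ((heq j _ _ (h6.trans ht) ht).1 h4) (ht' x ⟨hx, h6.trans ht⟩)
        · exact h x ⟨hx, h5.symm⟩ ((heq _ _ _ rfl h5.symm).1 h3)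
      · right
        intro x hx h2
        have h5 := le_antisymm (h1 (π x)) (hle _ _ h2)
        exact h x ⟨hx, h5⟩ ((heq _ _ _ rfl h5).1 h2)
  · have c1 := hcut.image (fun J : Set I => {x | x ∈ W ∧ π x ∈ J})
    have c2 := countable_iUnion (fun i : I =>
      (hr i).cuts.image (fun B : Set X => {x | x ∈ W ∧ π x < i} ∪ B))
    refine (c1.union c2).mono ?_
    rintro A ⟨hAW, hA⟩
    -- a cut of `W` either splits a last block or is a union of blocks
    by_cases hmax : ∃ x ∈ A, ∀ y ∈ A, π y ≤ π x
    · obtain ⟨x, hx, hi⟩ := hmax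
      right
      refine mem_iUnion.2 ⟨π x, A ∩ {y | y ∈ W ∧ π y = π x}, ⟨inter_subset_right, ?_⟩, ?_⟩
      · rintro y ⟨hy, hy2, hy3⟩ z ⟨hz, hz2⟩ h
        exact ⟨hA y hy z hz ((heq _ _ _ hz2 hy3).2 h), hz, hz2⟩
      · ext y
        constructor
        · rintro (⟨h1, h2⟩ | h)
          · exact hA x hx y h1 (hlt _ _ h2)
          · exact h.1
        · intro hy
          rcases (hi y hy).lt_or_eq with h | h
          · exact .inl ⟨hAW hy, h⟩
          · exact .inr ⟨hy, hAW hy, h⟩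
    · left
      push Not at hmax
      refine ⟨π '' A, ?_, ?_⟩
      · rintro _ j hj ⟨x, hx, rfl⟩
        obtain ⟨b, ⟨hb, hb'⟩, -⟩ := (hr j).bot
        obtain ⟨x', hx', h⟩ := hmax x hx
        exact ⟨b, hA x' hx' b hb (hlt _ _ (by order)), hb'⟩
      · ext y
        constructor
        · rintro ⟨hy, x, hx, h⟩
          obtain ⟨x', hx', h'⟩ := hmax x hx
          exact hA x' hx' y hy (hlt _ _ (by order))
        · intro hy
          exact ⟨hAW hy, y, hy, rfl⟩
  · obtain ⟨b, hb⟩ := hbot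
    obtain ⟨x, ⟨hx, hx2⟩, h⟩ := (hr b).bot
    refine ⟨x, hx, fun y hy h' => ?_⟩
    have e : π y = b := le_antisymm (hx2 ▸ hle _ _ h') (hb _)
    exact h y ⟨hy, e⟩ ((heq _ _ _ e hx2).1 h')
  · obtain ⟨b, hb⟩ := htop
    obtain ⟨x, ⟨hx, hx2⟩, h⟩ := (hr b).top
    refine ⟨x, hx, fun y hy h' => ?_⟩
    have e : π y = b := le_antisymm (hb _) (hx2 ▸ hle _ _ h')
    exact h y ⟨hy, e⟩ ((heq _ _ _ hx2 e).1 h')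

/-! ### Index orders -/

theorem countable_lower_of_wf (I : Type) [LinearOrder I] [WellFoundedLT I] [Countable I] :
    {J : Set I | IsLowerSet J}.Countable := by
  refine ((countable_range (Iio : I → Set I)).union (countable_singleton univ)).mono ?_
  intro J hJ
  rcases hJ.eq_univ_or_Iio with h | ⟨a, h⟩
  · exact .inr h
  · exact .inl ⟨a, h.symm⟩

/-- Every nonempty countable set can be ordered with endpoints, countably many cuts and the discrete
order topology: as a finite chain, or as `ω + ω*`. -/
theorem exists_index (S : Type) [Countable S] [Nonempty S] :
    ∃ (I : Type) (_ : LinearOrder I), Nonempty (S ≃ I) ∧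
      {J : Set I | IsLowerSet J}.Countable ∧
      (∃ b : I, ∀ i, b ≤ i) ∧ (∃ t : I, ∀ i, i ≤ t) ∧
      (∀ i : I, (∃ j, j ⋖ i) ∨ ∀ k, i ≤ k) ∧ (∀ i : I, (∃ j, i ⋖ j) ∨ ∀ k, k ≤ i) := by
  rcases finite_or_infinite S with hS | hS
  · obtain ⟨n, ⟨e⟩⟩ := Finite.exists_equiv_fin S
    have : Nonempty (Fin n) := e.nonempty_congr.1 inferInstance
    refine ⟨Fin n, inferInstance, ⟨e⟩, (Set.toFinite _).countable, ?_, ?_, ?_, ?_⟩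
    · obtain ⟨b, hb⟩ := Finite.exists_min (id : Fin n → Fin n)
      exact ⟨b, hb⟩
    · obtain ⟨b, hb⟩ := Finite.exists_max (id : Fin n → Fin n)
      exact ⟨b, hb⟩
    · intro i
      by_cases h : IsMin i
      · exact .inr fun k => (le_total i k).elim id (fun h' => h h')
      · exact .inl (exists_covBy_of_wellFoundedGT h)
    · intro i
      by_cases h : IsMax i
      · exact .inr fun k => (le_total k i).elim id (fun h' => h h')
      · exact .inl (exists_covBy_of_wellFoundedLT h)
  · refine ⟨ℕ ⊕ₗ ℕᵒᵈ, inferInstance, ?_, ?_, ⟨toLex (.inl 0), ?_⟩,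
      ⟨toLex (.inr (OrderDual.toDual 0)), ?_⟩, ?_, ?_⟩
    · have : Infinite (ℕ ⊕ ℕᵒᵈ) := inferInstance
      have : Countable (ℕ ⊕ ℕᵒᵈ) := inferInstance
      obtain ⟨e⟩ := nonempty_equiv_of_countable (α := S) (β := ℕ ⊕ ℕᵒᵈ)
      exact ⟨e.trans toLex⟩
    · have c := (countable_lower_of_wf ℕ).prod (countable_lower_of_wf ℕ)
      refine (c.image (fun p => {x : ℕ ⊕ₗ ℕᵒᵈ |
        (∃ n ∈ p.1, x = toLex (.inl n)) ∨ (∃ n ∉ p.2, x = toLex (.inr (OrderDual.toDual n)))})).mono ?_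
      intro J hJ
      refine ⟨({n | toLex (.inl n) ∈ J}, {n | toLex (.inr (OrderDual.toDual n)) ∉ J}), ⟨?_, ?_⟩, ?_⟩
      · intro a b hab ha
        exact hJ (Sum.Lex.inl_le_inl_iff.2 hab) ha
      · intro a b hab ha hb
        refine ha (hJ (Sum.Lex.inr_le_inr_iff.2 ?_) hb)
        exact hab
      · ext x
        rcases x with n | n
        · constructor
          · rintro (⟨m, hm, h⟩ | ⟨m, hm, h⟩)
            · rw [h]; exact hm
            · cases h
          · intro h
            exact .inl ⟨n, h, rfl⟩
        · constructor
          · rintro (⟨m, hm, h⟩ | ⟨m, hm, h⟩)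
            · cases h
            · rw [h]; exact not_not.1 hm
          · intro h
            exact .inr ⟨n, not_not.2 h, rfl⟩
    · rintro (n | n)
      · exact Sum.Lex.inl_le_inl_iff.2 (Nat.zero_le n)
      · exact Sum.Lex.inl_le_inr _ _
    · rintro (n | n)
      · exact Sum.Lex.inl_le_inr _ _
      · exact Sum.Lex.inr_le_inr_iff.2 (Nat.zero_le (OrderDual.ofDual n))
    · rintro (n | n)
      · rcases n with _ | n
        · right
          rintro (n | n)
          · exact Sum.Lex.inl_le_inl_iff.2 (Nat.zero_le n)
          · exact Sum.Lex.inl_le_inr _ _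
        · left
          refine ⟨toLex (.inl n), Sum.Lex.inl_lt_inl_iff.2 (Nat.lt_succ_self n), ?_⟩
          rintro (m | m) h1 h2
          · have h1 : n < m := Sum.Lex.inl_lt_inl_iff.1 h1
            have h2 : m < n + 1 := Sum.Lex.inl_lt_inl_iff.1 h2
            omega
          · exact Sum.Lex.not_inr_lt_inl h2
      · left
        refine ⟨toLex (.inr (OrderDual.toDual (OrderDual.ofDual n + 1))),
          Sum.Lex.inr_lt_inr_iff.2 (Nat.lt_succ_self (OrderDual.ofDual n)), ?_⟩
        rintro (m | m) h1 h2
        · exact Sum.Lex.not_inr_lt_inl h1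
        · have h1 : OrderDual.ofDual m < OrderDual.ofDual n + 1 :=
            Sum.Lex.inr_lt_inr_iff (β := ℕᵒᵈ) (b := m) |>.1 h1
          have h2 : OrderDual.ofDual n < OrderDual.ofDual m :=
            Sum.Lex.inr_lt_inr_iff (β := ℕᵒᵈ) (a := m) |>.1 h2
          omega
    · rintro (n | n)
      · left
        refine ⟨toLex (.inl (n + 1)), Sum.Lex.inl_lt_inl_iff.2 (Nat.lt_succ_self n), ?_⟩
        rintro (m | m) h1 h2
        · have h1 : n < m := Sum.Lex.inl_lt_inl_iff.1 h1
          have h2 : m < n + 1 := Sum.Lex.inl_lt_inl_iff.1 h2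
          omega
        · exact Sum.Lex.not_inr_lt_inl h2
      · obtain ⟨n, rfl⟩ := OrderDual.toDual.surjective n
        rcases n with _ | n
        · right
          rintro (n | n)
          · exact Sum.Lex.inl_le_inr _ _
          · exact Sum.Lex.inr_le_inr_iff.2 (Nat.zero_le (OrderDual.ofDual n))
        · left
          refine ⟨toLex (.inr (OrderDual.toDual n)),
            Sum.Lex.inr_lt_inr_iff.2 (Nat.lt_succ_self n), ?_⟩
          rintro (m | m) h1 h2
          · exact Sum.Lex.not_inr_lt_inl h1
          · have h1 : OrderDual.ofDual m < n + 1 :=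
              Sum.Lex.inr_lt_inr_iff (β := ℕᵒᵈ) (b := m) |>.1 h1
            have h2 : n < OrderDual.ofDual m :=
              Sum.Lex.inr_lt_inr_iff (β := ℕᵒᵈ) (a := m) |>.1 h2
            omega

/-! ### Assembling good sets -/

/-- Every nonempty clopen subset of `U` is good. -/
def HGood {X : Type} [TopologicalSpace X] (U : Set X) : Prop :=
  ∀ W, IsClopen W → W.Nonempty → W ⊆ U → Good W

/-- The blocks are the sets of points of `W` with a given first index in an enumeration of the
covering sets. -/
theorem good_of_cover {X : Type} [TopologicalSpace X] [Countable X] (W : Set X)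
    (hW : IsClopen W) (hne : W.Nonempty)
    (hcov : ∀ x ∈ W, ∃ U, IsClopen U ∧ x ∈ U ∧ HGood U) : Good W := by
  have : Nonempty W := hne.to_subtype
  obtain ⟨g, hg⟩ := exists_surjective_nat W
  choose U hUc hUm hUg using fun w : W => hcov w w.2
  have hex : ∀ w : W, ∃ n, (w : X) ∈ U (g n) := fun w => by
    obtain ⟨n, rfl⟩ := hg w
    exact ⟨n, hUm _⟩
  classical
  let p : W → ℕ := fun w => Nat.find (hex w)
  obtain ⟨I, _, ⟨e⟩, hcut, hbot, htop, hpred, hsucc⟩ := exists_index (range p)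
  have : Countable I := e.symm.injective.countable
  -- The value of `π` outside `W` is irrelevant.
  let π : X → I := fun x => if h : x ∈ W then e ⟨p ⟨x, h⟩, mem_range_self _⟩ else hbot.choose
  have hπ : ∀ (x) (h : x ∈ W), π x = e ⟨p ⟨x, h⟩, mem_range_self _⟩ := fun x h => dif_pos h
  have hfib : ∀ i, ∃ w : W, {x | x ∈ W ∧ π x = i} = {x | x ∈ W ∧ ∃ h : x ∈ W, p ⟨x, h⟩ = p w} ∧
      π w = i := by
    intro i
    obtain ⟨⟨n, w, hw⟩, rfl⟩ := e.surjective i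
    refine ⟨w, ?_, ?_⟩
    · ext x
      refine and_congr_right fun hx => ?_
      rw [hπ x hx, e.apply_eq_iff_eq, Subtype.ext_iff, hw]
      exact ⟨fun h => ⟨hx, h⟩, fun ⟨_, h⟩ => h⟩
    · rw [hπ w w.2, e.apply_eq_iff_eq, Subtype.ext_iff]
      exact hw
  have hset : ∀ n, {x | x ∈ W ∧ ∃ h : x ∈ W, p ⟨x, h⟩ = n} =
      W ∩ (U (g n) ∩ ⋂ m ∈ Iio n, (U (g m))ᶜ) := by
    intro n
    ext x
    refine and_congr_right fun hx => ?_
    have : (∃ h : x ∈ W, p ⟨x, h⟩ = n) ↔ p ⟨x, hx⟩ = n := ⟨fun ⟨_, h⟩ => h, fun h => ⟨hx, h⟩⟩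
    rw [this, Nat.find_eq_iff]
    simp
  have hclo : ∀ i, IsClopen {x | x ∈ W ∧ π x = i} := by
    intro i
    obtain ⟨w, hw, -⟩ := hfib i
    rw [hw, hset]
    exact hW.inter ((hUc _).inter ((finite_Iio _).isClopen_biInter fun m _ => (hUc _).compl))
  have hunion : ∀ J : Set I, IsOpen {x | x ∈ W ∧ π x ∈ J} := by
    intro J
    have : {x | x ∈ W ∧ π x ∈ J} = ⋃ i ∈ J, {x | x ∈ W ∧ π x = i} := by
      ext x; simp [and_comm]
    rw [this]
    exact isOpen_biUnion fun i _ => (hclo i).isOpen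
  refine good_lex W π hcut hbot htop (fun i => ?_) (fun i => hunion (Iio i))
    (fun i => hunion (Ioi i)) (fun V _ y _ _ => ?_) (fun V _ y _ _ => ?_)
  · obtain ⟨w, hw, hwi⟩ := hfib i
    refine hUg (g (p w)) _ (hclo i) ⟨w, w.2, hwi⟩ ?_
    rw [hw, hset]
    exact fun x hx => hx.2.1
  · rcases hpred (π y) with ⟨j, hj⟩ | h
    · exact .inl ⟨j, hj.1, fun x _ h1 h2 => absurd h2 (hj.2 h1)⟩
    · exact .inr h
  · rcases hsucc (π y) with ⟨j, hj⟩ | h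
    · exact .inl ⟨j, hj.1, fun x _ h1 h2 => absurd h2 (hj.2 h1)⟩
    · exact .inr h

/-- The blocks `V n \ V (n + 1)` in order type `ω`, followed by their limit point `x`. -/
theorem good_of_limit {X : Type} [TopologicalSpace X] (x : X)
    (V : ℕ → Set X) (hV : ∀ n, IsClopen (V n)) (hx : ∀ n, x ∈ V n)
    (hanti : Antitone V) (hbasis : ∀ U, IsOpen U → x ∈ U → ∃ n, V n ⊆ U)
    (hsep : ∀ y, y ≠ x → ∃ n, y ∉ V n)
    (hblock : ∀ n, Good (V n \ V (n + 1))) : Good (V 0) := by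
  classical
  -- `π y` is the index of the block of `y`, and `⊤` at `x`.
  let π : X → ℕ∞ := fun y => if h : ∃ n, y ∉ V (n + 1) then (Nat.find h : ℕ∞) else ⊤
  have key : ∀ (n : ℕ) y, (n : ℕ∞) < π y ↔ y ∈ V (n + 1) := by
    intro n y
    by_cases h : ∃ n, y ∉ V (n + 1)
    · simp only [π, dif_pos h, Nat.cast_lt, Nat.lt_find_iff, not_not]
      exact ⟨fun h' => h' n le_rfl, fun h' m hm => hanti (by omega) h'⟩
    · simp only [π, dif_neg h, ENat.natCast_lt_top, true_iff]
      push Not at h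
      exact h n
  have hπx : π x = ⊤ := by
    refine ENat.eq_top_iff_forall_gt.2 fun n => (key n x).2 (hx _)
  have htop : ∀ y, π y = ⊤ → y = x := by
    intro y hy
    by_contra hne
    obtain ⟨n, hn⟩ := hsep y hne
    refine hn (hanti (Nat.le_succ n) ((key n y).1 (hy ▸ ENat.natCast_lt_top n)))
  have hfib : ∀ n : ℕ, {y | y ∈ V 0 ∧ π y = n} = V n \ V (n + 1) := by
    intro n
    ext y
    have h1 := key n y
    rcases n with _ | n
    · simp only [mem_ofPred_eq, mem_sdiff, ← h1, not_lt]
      simp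
    · have h2 := key n y
      have h3 : y ∈ V (n + 1) → y ∈ V 0 := fun h => hanti (Nat.zero_le _) h
      have h4 : (n : ℕ∞) < π y ↔ ((n + 1 : ℕ) : ℕ∞) ≤ π y := by
        push_cast
        exact (ENat.add_one_le_iff (ENat.natCast_ne_top n)).symm
      simp only [mem_ofPred_eq, mem_sdiff, ← h1, not_lt, ← h2] at h3 ⊢
      rw [h4] at h3 ⊢
      exact ⟨fun h => ⟨h.2.ge, h.2.le⟩, fun h => ⟨h3 h.1, le_antisymm h.2 h.1⟩⟩
  have hlt : ∀ n : ℕ, {y | y ∈ V 0 ∧ π y < n} = V 0 \ V n := by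
    intro n
    ext y
    rcases n with _ | n
    · simp
    · have h2 := key n y
      have h4 : (n : ℕ∞) < π y ↔ ((n + 1 : ℕ) : ℕ∞) ≤ π y := by
        push_cast
        exact (ENat.add_one_le_iff (ENat.natCast_ne_top n)).symm
      simp only [mem_ofPred_eq, mem_sdiff, ← h2, h4, not_le]
  refine good_lex (V 0) π (countable_lower_of_wf ℕ∞) ⟨0, fun i => zero_le⟩ ⟨⊤, fun i => le_top⟩
    (fun i => ?_) (fun i => ?_) (fun i => ?_) (fun U hU y hy hyU => ?_) (fun U hU y hy hyU => ?_)
  · induction i using ENat.recTopCoe with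
    | top =>
      convert good_singleton x using 1
      ext y
      exact ⟨fun h => htop y h.2, fun h => h ▸ ⟨hx 0, hπx⟩⟩
    | coe n => rw [hfib]; exact hblock n
  · induction i using ENat.recTopCoe with
    | top =>
      have : {y | y ∈ V 0 ∧ π y < ⊤} = ⋃ n : ℕ, V 0 \ V n := by
        ext y
        simp only [mem_iUnion, ← hlt, mem_ofPred_eq]
        constructor
        · rintro ⟨h, h'⟩
          obtain ⟨n, hn⟩ := ENat.ne_top_iff_exists.1 h'.ne
          exact ⟨n + 1, h, by rw [← hn]; exact_mod_cast Nat.lt_succ_self n⟩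
        · rintro ⟨n, h, h'⟩
          exact ⟨h, h'.trans (ENat.natCast_lt_top n)⟩
      rw [this]
      exact isOpen_iUnion fun n => ((hV 0).diff (hV n)).isOpen
    | coe n => rw [hlt]; exact ((hV 0).diff (hV n)).isOpen
  · induction i using ENat.recTopCoe with
    | top => simp
    | coe n =>
      simp only [key]
      exact ((hV 0).inter (hV (n + 1))).isOpen
  · by_cases hy' : π y = ⊤
    · obtain rfl := htop y hy'
      obtain ⟨n, hn⟩ := hbasis U hU hyU
      left
      refine ⟨n, hy' ▸ ENat.natCast_lt_top n, fun z _ h1 _ => hn ?_⟩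
      exact hanti (Nat.le_succ n) ((key n z).1 h1)
    · obtain ⟨n, hn⟩ := ENat.ne_top_iff_exists.1 hy'
      rw [← hn]
      rcases n with _ | n
      · right; simp
      · left
        refine ⟨n, by exact_mod_cast Nat.lt_succ_self n, fun z _ h1 h2 => ?_⟩
        have := (ENat.add_one_le_iff (ENat.natCast_ne_top n)).2 h1
        push_cast at h2
        exact absurd h2 this.not_gt
  · by_cases hy' : π y = ⊤
    · right; rw [hy']; exact fun i => le_top
    · obtain ⟨n, hn⟩ := ENat.ne_top_iff_exists.1 hy'
      rw [← hn]
      left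
      refine ⟨(n + 1 : ℕ), by exact_mod_cast Nat.lt_succ_self n, fun z _ h1 h2 => ?_⟩
      have := (ENat.add_one_le_iff (ENat.natCast_ne_top n)).2 h1
      push_cast at h2
      exact absurd h2 this.not_gt

/-! ### The whole space -/

/-- A non-isolated point has a clopen neighbourhood base that decreases strictly, so that all
blocks `V n \ V (n + 1)` are nonempty. -/
theorem exists_clopen_sequence {X : Type} [TopologicalSpace X] [Countable X]
    [SecondCountableTopology X] [T3Space X] (x : X) (hx : ¬ IsOpen ({x} : Set X))
    (W : Set X) (hW : IsClopen W) (hxW : x ∈ W) :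
    ∃ V : ℕ → Set X, V 0 = W ∧ (∀ n, IsClopen (V n)) ∧ (∀ n, x ∈ V n) ∧ Antitone V ∧
      (∀ U, IsOpen U → x ∈ U → ∃ n, V n ⊆ U) ∧ ∀ n, (V n \ V (n + 1)).Nonempty := by
  have hbas : TopologicalSpace.IsTopologicalBasis {s : Set X | IsClopen s} :=
    CompletelyRegularSpace.isTopologicalBasis_clopens_of_cardinalMk_lt_continuum
      ((Cardinal.mk_le_aleph0_iff.mpr inferInstance).trans_lt Cardinal.aleph0_lt_continuum)
  obtain ⟨B, hB⟩ := (𝓝 x).exists_antitone_basis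
  have step : ∀ (n : ℕ) (V : {V : Set X // IsClopen V ∧ x ∈ V}),
      ∃ V' : {V : Set X // IsClopen V ∧ x ∈ V}, V'.1 ⊆ V.1 ∧ V'.1 ⊆ B n ∧ (V.1 \ V'.1).Nonempty := by
    rintro n ⟨V, hV, hxV⟩
    obtain ⟨y, hyV, hyx⟩ : ∃ y ∈ V, y ≠ x := by
      by_contra! h
      exact hx ((Set.eq_singleton_iff_unique_mem.2 ⟨hxV, h⟩) ▸ hV.isOpen)
    have hmem : V ∩ B n ∩ {y}ᶜ ∈ 𝓝 x :=
      Filter.inter_mem (Filter.inter_mem (hV.isOpen.mem_nhds hxV) (hB.1.mem_of_mem trivial))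
        (isOpen_compl_singleton.mem_nhds hyx.symm)
    obtain ⟨V', hV', hxV', hsub⟩ := hbas.mem_nhds_iff.1 hmem
    exact ⟨⟨V', hV', hxV'⟩, fun z hz => (hsub hz).1.1, fun z hz => (hsub hz).1.2,
      y, hyV, fun h => (hsub h).2 rfl⟩
  choose f hf1 hf2 hf3 using step
  let V : ℕ → {V : Set X // IsClopen V ∧ x ∈ V} := fun n =>
    Nat.rec ⟨W, hW, hxW⟩ (fun n V => f n V) n
  refine ⟨fun n => (V n).1, rfl, fun n => (V n).2.1, fun n => (V n).2.2,
    antitone_nat_of_succ_le fun n => hf1 n (V n), fun U hU hxU => ?_, fun n => hf3 n (V n)⟩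
  obtain ⟨n, -, hn⟩ := hB.1.mem_iff.1 (hU.mem_nhds hxU)
  exact ⟨n + 1, (hf2 n (V n)).trans hn⟩

theorem good_univ {X : Type} [TopologicalSpace X] [Countable X]
    [SecondCountableTopology X] [T3Space X] [Nonempty X] (hX : Scattered X) :
    Good (univ : Set X) := by
  have hbas : TopologicalSpace.IsTopologicalBasis {s : Set X | IsClopen s} :=
    CompletelyRegularSpace.isTopologicalBasis_clopens_of_cardinalMk_lt_continuum
      ((Cardinal.mk_le_aleph0_iff.mpr inferInstance).trans_lt Cardinal.aleph0_lt_continuum)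
  -- An isolated point of the exceptional set `S` would be the only bad point of a clopen set.
  let S : Set X := {x | ¬ ∃ U, IsClopen U ∧ x ∈ U ∧ HGood U}
  by_cases hS : S.Nonempty
  · exfalso
    obtain ⟨x, hxS, U, hU, hUS⟩ := hX S hS
    have hxU : x ∈ U := (hUS.symm.subset rfl).1
    obtain ⟨V, hV, hxV, hVU⟩ := hbas.exists_subset_of_mem_open hxU hU
    have hcov : ∀ y ∈ V, y ≠ x → ∃ U, IsClopen U ∧ y ∈ U ∧ HGood U := by
      intro y hy hyx
      by_contra h
      exact hyx (hUS.subset ⟨hVU hy, h⟩)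
    refine hxS ⟨V, hV, hxV, fun W hW hne hWV => ?_⟩
    by_cases hxW : x ∈ W
    · by_cases hiso : IsOpen ({x} : Set X)
      · refine absurd ⟨{x}, ⟨isClosed_singleton, hiso⟩, rfl, fun W' _ hne' hW' => ?_⟩ hxS
        rw [(Set.Nonempty.subset_singleton_iff hne').1 hW']
        exact good_singleton x
      · obtain ⟨v, rfl, hv, hxv, hanti, hb, hd⟩ := exists_clopen_sequence x hiso W hW hxW
        refine good_of_limit x v hv hxv hanti hb (fun y hy => ?_) fun n => ?_
        · obtain ⟨n, hn⟩ := hb {y}ᶜ isOpen_compl_singleton hy.symm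
          exact ⟨n, fun h => hn h rfl⟩
        · refine good_of_cover _ ((hv n).diff (hv (n + 1))) (hd n) fun y hy => ?_
          refine hcov y (hWV (hanti (Nat.zero_le n) hy.1)) ?_
          rintro rfl
          exact hy.2 (hxv _)
    · exact good_of_cover W hW hne fun y hy => hcov y (hWV hy) fun h => hxW (h ▸ hy)
  · exact good_of_cover _ isClopen_univ univ_nonempty fun x _ =>
      not_not.1 fun h => hS ⟨x, h⟩

/-- An embedded copy of `ℚ` yields a distinct lower set for every real number. -/
theorem not_strictMono_rat {L : Type} [LinearOrder L]
    (h : {A : Set L | ∀ x ∈ A, ∀ y, y ≤ x → y ∈ A}.Countable) :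
    ¬ ∃ f : ℚ → L, StrictMono f := by
  rintro ⟨f, hf⟩
  let c : ℝ → Set L := fun t => {x | ∃ q : ℚ, (q : ℝ) < t ∧ x ≤ f q}
  have hc : StrictMono c := by
    intro s t hst
    obtain ⟨q, h1, h2⟩ := exists_rat_btwn hst
    refine ⟨fun x ⟨p, hp, hx⟩ => ⟨p, hp.trans hst, hx⟩, fun hsub => ?_⟩
    obtain ⟨p, hp, hx⟩ := hsub (⟨q, h2, le_rfl⟩ : f q ∈ c t)
    have : (q : ℝ) ≤ p := by exact_mod_cast hf.le_iff_le.1 hx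
    linarith
  have hr : (range c).Countable := h.mono (by
    rintro _ ⟨t, rfl⟩ x ⟨q, hq, hx⟩ y hy
    exact ⟨q, hq, hy.trans hx⟩)
  have := hr.to_subtype
  exact not_countable ((Equiv.ofInjective c hc.injective).injective.countable : Countable ℝ)

theorem GoodOrder.orderTopology {X : Type} [t : TopologicalSpace X] [lo : LinearOrder X]
    (h : GoodOrder (univ : Set X) (fun x y : X => x < y)) : OrderTopology X := by
  refine ⟨le_antisymm ?_ ?_⟩
  · refine le_generateFrom ?_
    rintro _ ⟨a, rfl | rfl⟩
    · simpa [Ioi] using h.openR a trivial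
    · simpa [Iio] using h.openL a trivial
  · intro U hU
    refine (@isOpen_iff_forall_mem_open X (Preorder.topology X) _).2 fun y hy => ?_
    obtain ⟨A, hA, hyA, hAU⟩ : ∃ A, @IsOpen X (TopologicalSpace.generateFrom
        {s | ∃ a, s = Ioi a ∨ s = Iio a}) A ∧ y ∈ A ∧ ∀ x ∈ A, x < y → x ∈ U := by
      rcases h.nhdL U hU y trivial hy with ⟨a, -, h1, h2⟩ | h1
      · exact ⟨Ioi a, .basic _ ⟨a, .inl rfl⟩, h1, fun x hx => h2 x trivial hx⟩
      · exact ⟨univ, .univ, trivial, fun x _ => h1 x trivial⟩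
    obtain ⟨B, hB, hyB, hBU⟩ : ∃ A, @IsOpen X (TopologicalSpace.generateFrom
        {s | ∃ a, s = Ioi a ∨ s = Iio a}) A ∧ y ∈ A ∧ ∀ x ∈ A, y < x → x ∈ U := by
      rcases h.nhdR U hU y trivial hy with ⟨a, -, h1, h2⟩ | h1
      · exact ⟨Iio a, .basic _ ⟨a, .inr rfl⟩, h1, fun x hx hy => h2 x trivial hy hx⟩
      · exact ⟨univ, .univ, trivial, fun x _ => h1 x trivial⟩
    refine ⟨A ∩ B, fun x hx => ?_, TopologicalSpace.GenerateOpen.inter _ _ hA hB, hyA, hyB⟩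
    rcases lt_trichotomy x y with h | rfl | h
    · exact hAU x hx.1 h
    · exact hy
    · exact hBU x hx.2 h

/-- Every countable, second-countable, regular Hausdorff, scattered topological space is
homeomorphic to the order topology of a countable linear order that contains no subset
order-isomorphic to `ℚ` and has only countably many downward-closed subsets. -/
theorem stmt_8 (X : Type) [TopologicalSpace X] [Countable X]
    [SecondCountableTopology X] [T3Space X] (hX : Scattered X) :
    ∃ (L : Type) (lo : LinearOrder L) (ts : TopologicalSpace L),
      Countable L ∧
      @OrderTopology L ts lo.toPreorder ∧
      (¬ ∃ f : ℚ → L, @StrictMono ℚ L _ lo.toPreorder f) ∧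
      Set.Countable {A : Set L | ∀ x ∈ A, ∀ y : L, lo.le y x → y ∈ A} ∧
      Nonempty (@Homeomorph X L _ ts) := by
  suffices h : ∃ lo : LinearOrder X, OrderTopology X ∧
      Set.Countable {A : Set X | ∀ x ∈ A, ∀ y : X, y ≤ x → y ∈ A} by
    obtain ⟨lo, h1, h2⟩ := h
    exact ⟨X, lo, inferInstance, inferInstance, h1, not_strictMono_rat h2, h2,
      ⟨Homeomorph.refl X⟩⟩
  classical
  rcases isEmpty_or_nonempty X with hE | hN
  · let := linearOrderOfSTO (WellOrderingRel : X → X → Prop)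
    exact ⟨inferInstance, ⟨Subsingleton.elim _ _⟩, (Set.toFinite _).countable⟩
  · obtain ⟨r, hr⟩ := good_univ hX
    have := hr.sto
    let lo := linearOrderOfSTO r
    have hr' : GoodOrder (univ : Set X) (fun x y : X => x < y) := hr
    refine ⟨lo, hr'.orderTopology, hr'.cuts.mono ?_⟩
    intro A hA
    exact ⟨subset_univ _, fun x hx y _ hxy => hA x hx y hxy.le⟩
end

section
/- For any two countable, second-countable, locally compact Hausdorff topological spaces X and Y, either X admits a topological embedding into Y or Y admits a topological embedding into X. -/
/-!
Every countable locally compact Hausdorff space `X` carries a well-order whose order topology is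
the given topology (`exists_orderTopology`), that is, `X` is homeomorphic to an ordinal. Since of two
well-orders one is an initial segment of the other, and the inclusion of an initial segment is an
embedding for the order topologies, any two such spaces are comparable.

The well-order is built on open subsets of `X` and is encoded by an injective rank function into
the ordinals whose open rays are open and whose closed lower rays are compact (`IsRank`); these
conditions force the order topology (`orderTopology_of_rays`). Two constructions preserve
well-orderability: countable unions of compact open sets, by concatenation
(`exists_isRank_iUnion`), and adding one point to an open set so as to obtain a
compact open set, by putting the point on top (`exists_isRank_of_diff_singleton`). Let `G` be the
set of points having a compact open well-orderable neighbourhood. If `G` were not all of `X`, then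
by the Baire category theorem its closed countable complement would have a relatively isolated
point `p`. As `X` is zero-dimensional, `p` has a compact open neighbourhood `V` with
`V \ {p} ⊆ G`; concatenation makes `V \ {p}` well-orderable, hence so is `V`, and `p ∈ G`, a
contradiction. So `G = X`, and a last concatenation well-orders `X`.
-/

open Set Topology

/-- `f` well-orders the subset `s` of `X` by ordinal ranks, in such a way that the open rays are
open in `X` and the closed lower rays are compact. For open `s` this says that the subspace
topology of `s` is the order topology of the well-order. The values of `f` off `s` are
irrelevant. -/
structure IsRank {X : Type} [TopologicalSpace X] (s : Set X) (f : X → Ordinal.{0}) : Prop where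
  injOn : InjOn f s
  isOpen_lt : ∀ a ∈ s, IsOpen {x ∈ s | f x < f a}
  isOpen_gt : ∀ a ∈ s, IsOpen {x ∈ s | f a < f x}
  isCompact_le : ∀ a ∈ s, IsCompact {x ∈ s | f x ≤ f a}

section

variable {X : Type} [TopologicalSpace X]

lemma IsRank.inter {s c : Set X} {f : X → Ordinal.{0}} (h : IsRank s f) (hc : IsClopen c) :
    IsRank (s ∩ c) f where
  injOn := h.injOn.mono inter_subset_left
  isOpen_lt a ha := by
    convert (h.isOpen_lt a ha.1).inter hc.isOpen using 1
    ext x; simp only [mem_ofPred_eq, mem_inter_iff]; tauto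
  isOpen_gt a ha := by
    convert (h.isOpen_gt a ha.1).inter hc.isOpen using 1
    ext x; simp only [mem_ofPred_eq, mem_inter_iff]; tauto
  isCompact_le a ha := by
    convert (h.isCompact_le a ha.1).inter_right hc.isClosed using 1
    ext x; simp only [mem_ofPred_eq, mem_inter_iff]; tauto

lemma exists_ordinal_gt {ι : Type} (f : ι → Ordinal.{0}) : ∃ c, ∀ i, f i < c := by
  obtain ⟨b, hb⟩ := Ordinal.bddAbove_of_small (s := range f)
  exact ⟨Order.succ b, fun i => Order.lt_succ_of_le (hb ⟨i, rfl⟩)⟩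

/-- Putting a single point on top of a well-ordered open set, as in a one-point
compactification. -/
lemma exists_isRank_of_diff_singleton [T2Space X] {v : Set X} {p : X} {f : X → Ordinal.{0}}
    (hv : IsCompact v) (hvo : IsOpen v) (h : IsRank (v \ {p}) f) :
    ∃ g, IsRank v g := by
  classical
  obtain ⟨c, hc⟩ := exists_ordinal_gt f
  let g : X → Ordinal.{0} := fun x => if x = p then c else f x
  have hgp : g p = c := by simp [g]
  have hg : ∀ x, x ≠ p → g x = f x := fun x hx => by simp [g, hx]
  have hle : ∀ x, g x ≤ c := fun x => by
    by_cases hx : x = p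
    · rw [hx, hgp]
    · rw [hg x hx]; exact (hc x).le
  have hlow : ∀ a ∈ v, a ≠ p → {x ∈ v | g x ≤ g a} = {x ∈ v \ {p} | f x ≤ f a} := by
    intro a ha hap
    ext x
    by_cases hx : x = p
    · subst hx; simp [hgp, hg a hap, hc a]
    · simp [hg a hap, hg x hx, hx]
  refine ⟨g, ?_, ?_, ?_, ?_⟩
  · intro x hx y hy hxy
    by_cases hxp : x = p <;> by_cases hyp : y = p
    · rw [hxp, hyp]
    · rw [hxp, hgp, hg y hyp] at hxy; exact absurd hxy (hc y).ne'
    · rw [hyp, hgp, hg x hxp] at hxy; exact absurd hxy (hc x).ne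
    · rw [hg x hxp, hg y hyp] at hxy; exact h.injOn ⟨hx, hxp⟩ ⟨hy, hyp⟩ hxy
  · intro a ha
    by_cases hap : a = p
    · convert hvo.sdiff (isClosed_singleton (x := p)) using 1
      ext x
      by_cases hx : x = p
      · subst hx; simp [hap]
      · simp [hap, hgp, hg x hx, hc x, hx]
    · convert h.isOpen_lt a ⟨ha, hap⟩ using 1
      ext x
      by_cases hx : x = p
      · subst hx; simp [hgp, hg a hap, (hc a).le]
      · simp [hg a hap, hg x hx, hx]
  · intro a ha
    by_cases hap : a = p
    · convert isOpen_empty (X := X) using 1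
      ext x
      simpa [hap, hgp] using fun _ => hle x
    · convert hvo.sdiff (h.isCompact_le a ⟨ha, hap⟩).isClosed using 1
      rw [← hlow a ha hap]
      ext x
      simp only [mem_ofPred_eq, mem_sdiff, not_and, not_le]
      tauto
  · intro a ha
    by_cases hap : a = p
    · convert hv using 1
      ext x
      simpa [hap, hgp] using fun _ => hle x
    · rw [hlow a ha hap]
      exact h.isCompact_le a ⟨ha, hap⟩

/-- Concatenation: a countable union of compact open well-ordered sets is well-ordered
lexicographically by the first index `n` of a set containing the point and the rank in that
set. -/
lemma exists_isRank_iUnion [Countable X] [T2Space X] (K : ℕ → Set X) (f : ℕ → X → Ordinal.{0})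
    (hK : ∀ n, IsCompact (K n)) (hKo : ∀ n, IsOpen (K n)) (h : ∀ n, IsRank (K n) (f n)) :
    ∃ g, IsRank (⋃ n, K n) g := by
  classical
  obtain ⟨c, hc⟩ := exists_ordinal_gt (fun q : ℕ × X => f q.1 q.2)
  have hex : ∀ x ∈ ⋃ n, K n, ∃ n, x ∈ K n := fun x hx => mem_iUnion.1 hx
  let N : X → ℕ := fun x => if hx : ∃ n, x ∈ K n then Nat.find hx else 0
  have hN : ∀ x ∈ ⋃ n, K n, x ∈ K (N x) := fun x hx => by
    simp only [N, dif_pos (hex x hx)]; exact Nat.find_spec (hex x hx)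
  have hNle : ∀ x n, x ∈ K n → N x ≤ n := fun x n hx => by
    simp only [N, dif_pos (⟨n, hx⟩ : ∃ n, x ∈ K n)]; exact Nat.find_min' _ hx
  let g : X → Ordinal.{0} := fun x => c * (N x : Ordinal.{0}) + f (N x) x
  have hlt1 : ∀ x y, N x < N y → g x < g y := fun x y hxy => by
    calc g x < c * (N x : Ordinal.{0}) + c := by
          simpa only [g] using add_lt_add_right (hc (N x, x)) _
      _ = c * ((N x + 1 : ℕ) : Ordinal.{0}) := by push_cast; rw [mul_add, mul_one]
      _ ≤ c * (N y : Ordinal.{0}) := by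
          gcongr
          exact hxy
      _ ≤ g y := le_self_add
  have hlt2 : ∀ x y, N x = N y → (g x < g y ↔ f (N y) x < f (N y) y) := fun x y hxy => by
    simp [g, hxy]
  -- The points of the union whose first index is less than `n`.
  let P : ℕ → Set X := fun n => ⋃ m ∈ Iio n, K m
  have hPc : ∀ n, IsCompact (P n) := fun n => (finite_Iio n).isCompact_biUnion fun m _ => hK m
  have hPo : ∀ n, IsOpen (P n) := fun n => isOpen_biUnion fun m _ => hKo m
  have hPN : ∀ n, ∀ x ∈ ⋃ n, K n, x ∈ P n ↔ N x < n := fun n x hx => by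
    simp only [P, mem_iUnion, mem_Iio, exists_prop]
    exact ⟨fun ⟨m, hm, hxm⟩ => (hNle x m hxm).trans_lt hm, fun hn => ⟨_, hn, hN x hx⟩⟩
  have hPs : ∀ n, P n ⊆ ⋃ n, K n := fun n => iUnion₂_subset fun m _ => subset_iUnion K m
  have hKs : ∀ n, K n ⊆ ⋃ n, K n := fun n => subset_iUnion K n
  -- The lower rays at `a`: all earlier blocks, and a ray of the block of `a`.
  have key : ∀ a ∈ ⋃ n, K n, ∀ x ∈ ⋃ n, K n,
      (g x < g a ↔ x ∈ P (N a) ∨ (x ∈ K (N a) ∧ f (N a) x < f (N a) a)) := by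
    intro a ha x hx
    rw [hPN _ x hx]
    rcases lt_trichotomy (N x) (N a) with hl | he | hl
    · simp [hl, hlt1 x a hl]
    · have := hN x hx
      rw [he] at this
      simp [he, hlt2 x a he, this]
    · have h1 : x ∉ K (N a) := fun hxa => (hNle x _ hxa).not_gt hl
      simp only [h1, false_and, or_false, hl.not_gt, (hlt1 a x hl).not_gt]
  have key' : ∀ a ∈ ⋃ n, K n, ∀ x ∈ ⋃ n, K n,
      (g x ≤ g a ↔ x ∈ P (N a) ∨ (x ∈ K (N a) ∧ f (N a) x ≤ f (N a) a)) := by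
    intro a ha x hx
    rw [hPN _ x hx]
    rcases lt_trichotomy (N x) (N a) with hl | he | hl
    · simp [hl, (hlt1 x a hl).le]
    · have := hN x hx
      rw [he] at this
      have h2 := hlt2 a x he.symm
      rw [he] at h2
      rw [← not_lt, h2]
      simp [he, this]
    · have h1 : x ∉ K (N a) := fun hxa => (hNle x _ hxa).not_gt hl
      simp only [h1, false_and, or_false, hl.not_gt, (hlt1 a x hl).not_ge]
  have hle : ∀ a ∈ ⋃ n, K n, {x ∈ ⋃ n, K n | g x ≤ g a} =
      P (N a) ∪ {x ∈ K (N a) | f (N a) x ≤ f (N a) a} := by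
    intro a ha
    ext x
    constructor
    · rintro ⟨hx, hxa⟩
      exact (key' a ha x hx).1 hxa
    · intro hx
      have hx' : x ∈ ⋃ n, K n := hx.elim (fun hx => hPs _ hx) (fun hx => hKs _ hx.1)
      exact ⟨hx', (key' a ha x hx').2 hx⟩
  have hcomp : ∀ a ∈ ⋃ n, K n, IsCompact {x ∈ ⋃ n, K n | g x ≤ g a} := fun a ha => by
    rw [hle a ha]
    exact (hPc _).union ((h _).isCompact_le a (hN a ha))
  refine ⟨g, ?_, ?_, ?_, hcomp⟩
  · intro x hx y hy hxy
    rcases lt_trichotomy (N x) (N y) with hl | he | hl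
    · exact absurd hxy (hlt1 x y hl).ne
    · have hx' := hN x hx
      rw [he] at hx'
      refine (h (N y)).injOn hx' (hN y hy) ?_
      simpa [g, he] using hxy
    · exact absurd hxy (hlt1 y x hl).ne'
  · intro a ha
    convert (hPo (N a)).union ((h _).isOpen_lt a (hN a ha)) using 1
    ext x
    constructor
    · rintro ⟨hx, hxa⟩
      exact (key a ha x hx).1 hxa
    · intro hx
      have hx' : x ∈ ⋃ n, K n := hx.elim (fun hx => hPs _ hx) (fun hx => hKs _ hx.1)
      exact ⟨hx', (key a ha x hx').2 hx⟩
  · intro a ha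
    convert (isOpen_iUnion hKo).sdiff (hcomp a ha).isClosed using 1
    ext x
    simp only [mem_ofPred_eq, mem_sdiff, not_and, not_le]
    tauto

variable [Countable X] [SecondCountableTopology X] [T2Space X] [LocallyCompactSpace X]

/-- Zero-dimensionality: a countable metrizable space is totally disconnected, and a totally
disconnected locally compact Hausdorff space has a basis of compact open sets. -/
lemma exists_compact_open {x : X} {U : Set X} (hU : IsOpen U) (hx : x ∈ U) :
    ∃ V, IsCompact V ∧ IsOpen V ∧ x ∈ V ∧ V ⊆ U := by
  let _ := TopologicalSpace.metrizableSpaceMetric X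
  have : TotallyDisconnectedSpace X := ⟨(to_countable (univ : Set X)).isTotallyDisconnected⟩
  obtain ⟨C, hC, hxC, hCU⟩ := exists_compact_subset hU hx
  obtain ⟨V, hV, hxV, hVC⟩ :=
    (loc_compact_Haus_tot_disc_of_zero_dim (H := X)).exists_subset_of_mem_open hxC isOpen_interior
  have hV' : IsClopen V := hV
  exact ⟨V, hC.of_isClosed_subset hV'.isClosed (hVC.trans interior_subset), hV'.isOpen, hxV,
    (hVC.trans interior_subset).trans hCU⟩

/-- Well-orderability is a local property: by concatenation, an open set all of whose points have
compact open well-ordered neighbourhoods in `X` is itself well-ordered. -/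
lemma exists_isRank_of_forall_mem {W : Set X} (hW : IsOpen W)
    (h : ∀ x ∈ W, ∃ V f, IsCompact V ∧ IsOpen V ∧ x ∈ V ∧ IsRank V f) :
    ∃ g, IsRank W g := by
  have h' : ∀ x : W, ∃ V f, IsCompact V ∧ IsOpen V ∧ x.1 ∈ V ∧ IsRank V f ∧ V ⊆ W := by
    intro x
    obtain ⟨V, f, hV, hVo, hxV, hf⟩ := h x x.2
    obtain ⟨C, hC, hCo, hxC, hCW⟩ := exists_compact_open hW x.2
    exact ⟨V ∩ C, f, hV.inter hC, hVo.inter hCo, ⟨hxV, hxC⟩, hf.inter ⟨hC.isClosed, hCo⟩,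
      inter_subset_right.trans hCW⟩
  choose V f hV hVo hxV hf hVW using h'
  rcases isEmpty_or_nonempty W with hE | hE
  · have hW0 : W = ∅ := isEmpty_coe_sort.1 hE
    subst hW0
    exact ⟨fun _ => 0, by simp, by simp, by simp, by simp⟩
  · obtain ⟨e, he⟩ := exists_surjective_nat W
    have hWU : W = ⋃ n, V (e n) := by
      refine subset_antisymm (fun x hx => ?_) (iUnion_subset fun n => hVW _)
      obtain ⟨n, hn⟩ := he ⟨x, hx⟩
      refine mem_iUnion.2 ⟨n, ?_⟩
      rw [hn]
      exact hxV ⟨x, hx⟩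
    rw [hWU]
    exact exists_isRank_iUnion _ (fun n => f (e n)) (fun n => hV _) (fun n => hVo _)
      (fun n => hf _)

/-- The scatteredness of countable locally compact Hausdorff spaces, from the Baire category
theorem. -/
lemma exists_isolated {F : Set X} (hF : IsClosed F) (hne : F.Nonempty) :
    ∃ p ∈ F, ∃ O, IsOpen O ∧ p ∈ O ∧ O ∩ F ⊆ {p} := by
  have : LocallyCompactSpace F := hF.isClosedEmbedding_subtypeVal.locallyCompactSpace
  have : Nonempty F := hne.to_subtype
  obtain ⟨p, hp⟩ := nonempty_interior_of_iUnion_of_closed (f := fun p : F => ({p} : Set F))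
    (fun p => isClosed_singleton) (iUnion_of_singleton F)
  obtain ⟨q, hq⟩ := hp
  have hqp : q = p := mem_singleton_iff.1 (interior_subset hq)
  subst hqp
  obtain ⟨O, hO, hO'⟩ := isOpen_induced_iff.1 (isOpen_interior (s := ({q} : Set F)))
  refine ⟨q, q.2, O, hO, ?_, ?_⟩
  · rw [← hO'] at hq
    exact hq
  · rintro x ⟨hxO, hxF⟩
    have h1 : (⟨x, hxF⟩ : F) ∈ interior ({q} : Set F) := by
      rw [← hO']
      exact hxO
    exact congrArg Subtype.val (mem_singleton_iff.1 (interior_subset h1))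

lemma exists_isRank_univ : ∃ g, IsRank (univ : Set X) g := by
  let G : Set X := {x | ∃ V f, IsCompact V ∧ IsOpen V ∧ x ∈ V ∧ IsRank V f}
  have hG : IsOpen G := isOpen_iff_forall_mem_open.2 fun x ⟨V, f, hV, hVo, hxV, hf⟩ =>
    ⟨V, fun y hy => ⟨V, f, hV, hVo, hy, hf⟩, hVo, hxV⟩
  suffices hGu : G = univ from
    exists_isRank_of_forall_mem isOpen_univ fun x _ => (hGu ▸ mem_univ x : x ∈ G)
  by_contra hne
  obtain ⟨p, hp, O, hO, hpO, hOG⟩ := exists_isolated hG.isClosed_compl (nonempty_compl.2 hne)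
  obtain ⟨V, hV, hVo, hpV, hVO⟩ := exists_compact_open hO hpO
  obtain ⟨f, hf⟩ := exists_isRank_of_forall_mem (W := V \ {p}) (hVo.sdiff isClosed_singleton)
    fun x hx => by
      by_contra hxG
      exact hx.2 (hOG ⟨hVO hx.1, hxG⟩)
  obtain ⟨g, hg⟩ := exists_isRank_of_diff_singleton hV hVo hf
  exact hp ⟨V, g, hV, hVo, hpV, hg⟩

end

/-- A topology with open rays is finer than the order topology; compactness of the closed lower
rays gives the converse: if `U` is an open neighbourhood of `x` not containing `Iic x`, then
the compact set `Iic x \ U` has a largest element `b`, and `Ioc b x` is a neighbourhood of `x`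
contained in `U`, open for the order topology because the order is a well-order. -/
lemma orderTopology_of_rays {X : Type} [t : TopologicalSpace X] [LinearOrder X] [WellFoundedLT X]
    (h1 : ∀ a : X, IsOpen (Iio a)) (h2 : ∀ a : X, IsOpen (Ioi a))
    (h3 : ∀ a : X, IsCompact (Iic a)) : OrderTopology X := by
  have : ClosedIciTopology X := ⟨fun a => by rw [← compl_Iio]; exact (h1 a).isClosed_compl⟩
  refine ⟨le_antisymm ?_ ?_⟩
  · refine le_generateFrom ?_
    rintro s ⟨a, rfl | rfl⟩
    exacts [h2 a, h1 a]
  · intro U hU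
    have hmax : ∀ x, (Iic x \ U).Nonempty → ∃ b, IsGreatest (Iic x \ U) b := fun x hne =>
      ((h3 x).diff hU).exists_isGreatest hne
    let t' : TopologicalSpace X := TopologicalSpace.generateFrom {s | ∃ a, s = Ioi a ∨ s = Iio a}
    have g1 : ∀ a : X, IsOpen[t'] (Iio a) := fun a => .basic _ ⟨a, .inr rfl⟩
    have g2 : ∀ a : X, IsOpen[t'] (Ioi a) := fun a => .basic _ ⟨a, .inl rfl⟩
    -- `Iic x` is the open lower ray of the successor of `x`, if there is one.
    have g3 : ∀ x : X, IsOpen[t'] (Iic x) := fun x => by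
      by_cases hx : (Ioi x).Nonempty
      · obtain ⟨y, hy, hmin⟩ := WellFounded.has_min (wellFounded_lt (α := X)) _ hx
        have : Iic x = Iio y := by
          ext z
          exact ⟨fun hz => lt_of_le_of_lt hz hy, fun hz => not_lt.1 fun hxz => hmin z hxz hz⟩
        rw [this]
        exact g1 y
      · have : Iic x = univ := by
          rw [not_nonempty_iff_eq_empty] at hx
          rw [← compl_Ioi, hx, compl_empty]
        rw [this]
        exact @isOpen_univ X t'
    refine (@isOpen_iff_forall_mem_open X t' U).2 fun x hx => ?_
    by_cases hne : (Iic x \ U).Nonempty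
    · obtain ⟨b, hb, hb'⟩ := hmax x hne
      have hbx : b < x := lt_of_le_of_ne hb.1 fun hbx => hb.2 (hbx ▸ hx)
      refine ⟨Ioi b ∩ Iic x, fun z hz => ?_, @IsOpen.inter X t' _ _ (g2 b) (g3 x), hbx, le_rfl⟩
      by_contra hzU
      exact (hb' ⟨hz.2, hzU⟩).not_gt hz.1
    · refine ⟨Iic x, fun z hz => ?_, g3 x, le_rfl⟩
      by_contra hzU
      exact hne ⟨z, hz, hzU⟩

lemma exists_orderTopology (X : Type) [TopologicalSpace X] [Countable X] [SecondCountableTopology X]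
    [T2Space X] [LocallyCompactSpace X] :
    ∃ _ : LinearOrder X, WellFoundedLT X ∧ OrderTopology X := by
  obtain ⟨g, hg⟩ := exists_isRank_univ (X := X)
  let _ : LinearOrder X := LinearOrder.lift' g (injOn_univ.1 hg.injOn)
  have hwf : WellFoundedLT X := ⟨InvImage.wf g wellFounded_lt⟩
  refine ⟨inferInstance, hwf, orderTopology_of_rays ?_ ?_ ?_⟩
  · intro a
    convert hg.isOpen_lt a (mem_univ a) using 1
    ext x
    exact ⟨fun h => ⟨mem_univ x, h⟩, fun h => h.2⟩
  · intro a
    convert hg.isOpen_gt a (mem_univ a) using 1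
    ext x
    exact ⟨fun h => ⟨mem_univ x, h⟩, fun h => h.2⟩
  · intro a
    convert hg.isCompact_le a (mem_univ a) using 1
    ext x
    exact ⟨fun h => ⟨mem_univ x, h⟩, fun h => h.2⟩

lemma InitialSeg.isEmbedding {X Y : Type} [TopologicalSpace X] [TopologicalSpace Y]
    [LinearOrder X] [LinearOrder Y] [OrderTopology X] [OrderTopology Y]
    (f : InitialSeg ((· < ·) : X → X → Prop) ((· < ·) : Y → Y → Prop)) : IsEmbedding f := by
  have hf : StrictMono f := fun a b hab => f.map_rel_iff.2 hab
  refine hf.isEmbedding_of_ordConnected ⟨?_⟩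
  rintro _ ⟨a, rfl⟩ _ ⟨b, rfl⟩ z hz
  rcases hz.2.eq_or_lt with h | h
  · exact ⟨b, h.symm⟩
  · exact f.mem_range_of_rel h

/-- Any two countable, second-countable, locally compact Hausdorff topological spaces are
topologically comparable: one embeds into the other. -/
theorem stmt_16 (X Y : Type) [TopologicalSpace X] [Countable X] [SecondCountableTopology X]
    [T2Space X] [WeaklyLocallyCompactSpace X]
    [TopologicalSpace Y] [Countable Y] [SecondCountableTopology Y]
    [T2Space Y] [WeaklyLocallyCompactSpace Y] :
    (∃ f : X → Y, Topology.IsEmbedding f) ∨ (∃ g : Y → X, Topology.IsEmbedding g) := by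
  obtain ⟨_, _, _⟩ := exists_orderTopology X
  obtain ⟨_, _, _⟩ := exists_orderTopology Y
  rcases InitialSeg.total ((· < ·) : X → X → Prop) ((· < ·) : Y → Y → Prop) with f | g
  · exact .inl ⟨f, f.isEmbedding⟩
  · exact .inr ⟨g, g.isEmbedding⟩
end
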